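/- Let n be a positive integer with n ≥ 41 and let (μ_i)_{i ≥ 1} be a nondecreasing sequence of positive real numbers which for every k ≥ 1 satisfies Yang's first inequality ∑_{i=1}^k (μ_{k+1} − μ_i)(μ_{k+1} − (1 + 4/n) μ_i) ≤ 0, and which in addition satisfies ∑_{i=1}^n (μ_{i+1} − μ_1) ≤ 4 μ_1. Then for every k ≥ 41, μ_{k+1} ≤ k^{2/n} · μ_1. (This is the sequence form of part (1) of Theorem 4.5, obtained in the paper by combining Theorem 3.4 with the lower-bound Theorem 4.2 via Theorem 3.1 of Cheng–Yang.) -/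

import Mathlib

/-! Write `G` and `V` for the mean and the variance of the first `k` terms and `b = 4 / n`. Yang's
inequality says `(μ (k + 1) - G) * (μ (k + 1) - (1 + b) * G) + (1 + b) * V ≤ 0`. It bounds
`μ (k + 1)` by `(1 + b) * G`, it bounds `μ (k + 1) ^ 2` by a multiple of `F k = b / 2 * G ^ 2 - V`,
and it makes `F k / k ^ b` nonincreasing. For `n < k` one compares `F k` with `F (n + 1)`, which the
bound on the first `n + 1` terms controls. For `11 ≤ k ≤ n` monotonicity turns the same bound into
`μ (k + 1) * ((n + 4) * (n + 1) - 4 * k) ≤ (n + 4) * (n + 5) * μ 1`, and since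
`k ^ (2 / n) * ((n + 4) * (n + 1) - 4 * k)` is concave in `k` it is enough to look at `k = 11` and
`k = n`. This fails only for `k = n = 41`, where the variance has to be used again; when `n = 41` the
right end is therefore `k = 40`. -/

open Finset

section RealPowers

theorem choose_add_sub_one_eq_ascPochhammer_div (a : ℝ) (i : ℕ) :
    Ring.choose (a + i - 1) i = (ascPochhammer ℝ i).eval a / i.factorial := by
  rw [← Ring.multichoose_eq, eq_div_iff (by positivity), mul_comm, ← nsmul_eq_mul,
    Ring.factorial_nsmul_multichoose_eq_ascPochhammer, Polynomial.ascPochhammer_smeval_eq_eval]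

theorem sum_ascPochhammer_div_factorial_mul_pow_le {a x : ℝ} (ha : 0 ≤ a) (hx : 0 ≤ x)
    (hx1 : x < 1) (N : ℕ) :
    ∑ i ∈ range N, (ascPochhammer ℝ i).eval a / i.factorial * x ^ i ≤ 1 / (1 - x) ^ a := by
  have hmem : x ∈ Metric.eball (0 : ℝ) 1 := by
    rwa [← ENNReal.ofReal_one, Metric.eball_ofReal, mem_ball_zero_iff, Real.norm_of_nonneg hx]
  have hsum := (Real.one_div_one_sub_rpow_hasFPowerSeriesOnBall_zero a).hasSum hmem
  simp only [FormalMultilinearSeries.ofScalars_apply_eq, smul_eq_mul, zero_add,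
    choose_add_sub_one_eq_ascPochhammer_div] at hsum
  refine sum_le_hasSum (range N) (fun i _ => ?_) hsum
  have hcoeff : 0 ≤ (ascPochhammer ℝ i).eval a := by
    rcases ha.eq_or_lt with rfl | ha
    · rw [ascPochhammer_eval_zero]
      split_ifs <;> norm_num
    · exact (ascPochhammer_pos i a ha).le
  positivity

theorem cubic_le_one_div_one_sub_rpow {a x : ℝ} (ha : 0 ≤ a) (hx : 0 ≤ x) (hx1 : x < 1) :
    1 + a * x + a * (a + 1) / 2 * x ^ 2 + a * (a + 1) * (a + 2) / 6 * x ^ 3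
      ≤ 1 / (1 - x) ^ a := by
  refine le_of_eq_of_le ?_ (sum_ascPochhammer_div_factorial_mul_pow_le ha hx hx1 4)
  simp [sum_range_succ, ascPochhammer_succ_eval, Nat.factorial]

theorem concaveOn_rpow_mul_sub {s c d : ℝ} (hs : 0 ≤ s) (hs1 : s ≤ 1) (hc : 0 ≤ c) (hd : 0 ≤ d) :
    ConcaveOn ℝ (Set.Ici 0) fun x : ℝ => x ^ s * (c - d * x) := by
  have h := ((Real.concaveOn_rpow hs hs1).smul hc).sub
    ((convexOn_rpow (p := s + 1) (by linarith)).smul hd)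
  refine h.congr fun x hx => ?_
  simp only [Pi.sub_apply, smul_eq_mul]
  rw [Real.rpow_add_one' hx (by linarith)]
  ring

theorem le_rpow_div_of_pow_le {x y : ℝ} {n p : ℕ} (hx : 0 ≤ x) (hy : 0 ≤ y) (hn : n ≠ 0)
    (h : x ^ n ≤ y ^ p) : x ≤ y ^ ((p : ℝ) / n) := by
  rw [div_eq_mul_inv, Real.rpow_mul hy, Real.rpow_natCast,
    Real.le_rpow_inv_iff_of_pos hx (by positivity) (by positivity), Real.rpow_natCast]
  exact h

theorem mul_le_rpow_mul_of_div_pow_le {x c D : ℝ} {n p : ℕ} (hx : 0 ≤ x) (hc : 0 ≤ c) (hD : 0 < D)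
    (hn : n ≠ 0) (h : (c / D) ^ n ≤ x ^ p) : c ≤ x ^ ((p : ℝ) / n) * D :=
  (div_le_iff₀ hD).1 (le_rpow_div_of_pow_le (by positivity) hx hn h)

theorem pow_le_exp_of_le_one_add_div {x c : ℝ} {n : ℕ} (hx : 0 ≤ x) (hn : n ≠ 0)
    (h : x ≤ 1 + c / n) : x ^ n ≤ Real.exp c := by
  calc x ^ n ≤ Real.exp (c / n) ^ n := by
        gcongr
        linarith [Real.add_one_le_exp (c / n)]
    _ = Real.exp c := by
        rw [← Real.exp_nat_mul, mul_div_cancel₀ c (by positivity)]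

theorem exp_four_lt : Real.exp 4 < 55 := by
  calc Real.exp 4 = Real.exp 1 ^ 4 := by rw [← Real.exp_nat_mul]; norm_num
    _ < 2.7182818286 ^ 4 := by
        gcongr
        exact Real.exp_one_lt_d9
    _ < 55 := by norm_num

theorem exp_nineteen_fourths_lt : Real.exp (19 / 4) < 11 ^ 2 := by
  refine lt_of_pow_lt_pow_left₀ 4 (by norm_num) ?_
  calc Real.exp (19 / 4) ^ 4 = Real.exp 1 ^ 19 := by
        rw [← Real.exp_nat_mul, ← Real.exp_nat_mul]; norm_num
    _ < 2.7182818286 ^ 19 := by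
        gcongr
        exact Real.exp_one_lt_d9
    _ < (11 ^ 2) ^ 4 := by norm_num

end RealPowers

section PrefixStatistics

variable {μ : ℕ → ℝ} {k : ℕ}

/-- The mean `G_k` of the terms `μ 1, …, μ k`, with junk value `0` at `k = 0`. -/
noncomputable def prefixMean (μ : ℕ → ℝ) (k : ℕ) : ℝ :=
  (∑ i ∈ Icc 1 k, μ i) / k

/-- The variance `T_k - G_k ^ 2` of the terms `μ 1, …, μ k`, where `T_k` is the mean of their
squares. -/
noncomputable def prefixVariance (μ : ℕ → ℝ) (k : ℕ) : ℝ :=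
  prefixMean (fun i => μ i ^ 2) k - prefixMean μ k ^ 2

theorem natCast_mul_prefixMean (μ : ℕ → ℝ) (k : ℕ) :
    k * prefixMean μ k = ∑ i ∈ Icc 1 k, μ i := by
  rcases eq_or_ne k 0 with rfl | hk
  · simp
  · exact mul_div_cancel₀ _ (by positivity)

theorem prefixMean_nonneg (h : ∀ i, 1 ≤ i → 0 ≤ μ i) (k : ℕ) : 0 ≤ prefixMean μ k :=
  div_nonneg (sum_nonneg fun i hi => h i (mem_Icc.1 hi).1) k.cast_nonneg

theorem add_one_mul_prefixMean_succ (μ : ℕ → ℝ) (k : ℕ) :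
    (k + 1) * prefixMean μ (k + 1) = k * prefixMean μ k + μ (k + 1) := by
  rw [natCast_mul_prefixMean, ← sum_Icc_succ_top (by lia), ← natCast_mul_prefixMean,
    Nat.cast_succ]

theorem prefixMean_succ (μ : ℕ → ℝ) (k : ℕ) :
    prefixMean μ (k + 1) = prefixMean μ k + 1 / (k + 1) * (μ (k + 1) - prefixMean μ k) := by
  have h := add_one_mul_prefixMean_succ μ k
  field_simp
  linarith

theorem prefixVariance_succ (μ : ℕ → ℝ) (k : ℕ) :
    prefixVariance μ (k + 1) = (1 - 1 / (k + 1)) *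
      (prefixVariance μ k + 1 / (k + 1) * (μ (k + 1) - prefixMean μ k) ^ 2) := by
  simp only [prefixVariance, prefixMean_succ]
  ring

theorem prefixVariance_nonneg (μ : ℕ → ℝ) (k : ℕ) : 0 ≤ prefixVariance μ k := by
  induction k with
  | zero => simp [prefixVariance, prefixMean]
  | succ k ih =>
    have hle : (1 : ℝ) / (k + 1) ≤ 1 := div_le_one_of_le₀ (by simp) (by positivity)
    rw [prefixVariance_succ]
    exact mul_nonneg (sub_nonneg.2 hle) (by positivity)

theorem sq_prefixMean_sub_first_le (μ : ℕ → ℝ) (hk : k ≠ 0) :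
    (prefixMean μ k - μ 1) ^ 2 ≤ (k - 1) * prefixVariance μ k := by
  have hk1 : 1 ∈ Icc 1 k := mem_Icc.2 ⟨le_rfl, Nat.pos_of_ne_zero hk⟩
  have h := sq_sum_le_card_mul_sum_sq (s := (Icc 1 k).erase 1) (f := μ)
  rw [sum_erase_eq_sub hk1, sum_erase_eq_sub hk1, card_erase_of_mem hk1, Nat.card_Icc,
    ← natCast_mul_prefixMean, ← natCast_mul_prefixMean, Nat.add_sub_cancel,
    Nat.cast_pred (Nat.pos_of_ne_zero hk)] at h
  refine le_of_mul_le_mul_left (a := (k : ℝ)) ?_ (by positivity)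
  unfold prefixVariance
  linarith

theorem mul_prefixMean_add_le_of_monotoneOn (hμ : MonotoneOn μ (Set.Ici 1)) {m : ℕ}
    (hkm : k ≤ m) :
    k * prefixMean μ k + (m - k) * μ (k + 1) ≤ m * prefixMean μ m := by
  induction m, hkm using Nat.le_induction with
  | base => simp
  | succ m hm ih =>
    have hle : μ (k + 1) ≤ μ (m + 1) :=
      hμ (Set.mem_Ici.2 (by lia)) (Set.mem_Ici.2 (by lia)) (by lia)
    rw [Nat.cast_succ, add_one_mul_prefixMean_succ]
    linarith

theorem add_one_mul_prefixMean_eq_sum_sub (μ : ℕ → ℝ) (k : ℕ) :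
    (k + 1) * prefixMean μ (k + 1) = ∑ i ∈ Icc 1 k, (μ (i + 1) - μ 1) + (k + 1) * μ 1 := by
  induction k with
  | zero => simp [prefixMean]
  | succ k ih =>
    rw [add_one_mul_prefixMean_succ, Nat.cast_succ, ih, sum_Icc_succ_top (by lia)]
    ring

end PrefixStatistics

section Yang

variable {μ : ℕ → ℝ} {b : ℝ} {k : ℕ}

/-- Yang's first inequality at level `k`, with `b` in place of `4 / n`. -/
def YangInequality (b : ℝ) (μ : ℕ → ℝ) (k : ℕ) : Prop :=
  ∑ i ∈ Icc 1 k, (μ (k + 1) - μ i) * (μ (k + 1) - (1 + b) * μ i) ≤ 0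

/-- The quantity `F_k = (1 + 2 / n) * G_k ^ 2 - T_k` of Cheng and Yang, with `b` in place of
`4 / n`. -/
noncomputable def chengYangFunctional (b : ℝ) (μ : ℕ → ℝ) (k : ℕ) : ℝ :=
  b / 2 * prefixMean μ k ^ 2 - prefixVariance μ k

theorem yangInequality_iff (hk : k ≠ 0) :
    YangInequality b μ k ↔ (μ (k + 1) - prefixMean μ k) * (μ (k + 1) - (1 + b) * prefixMean μ k)
      + (1 + b) * prefixVariance μ k ≤ 0 := by
  have hsum (y : ℝ) : ∑ i ∈ Icc 1 k, (y - μ i) * (y - (1 + b) * μ i)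
      = k * ((y - prefixMean μ k) * (y - (1 + b) * prefixMean μ k)
        + (1 + b) * prefixVariance μ k) := by
    calc _ = ∑ i ∈ Icc 1 k, (y ^ 2 - (2 + b) * y * μ i + (1 + b) * μ i ^ 2) :=
          sum_congr rfl fun i _ => by ring
      _ = k * y ^ 2 - (2 + b) * y * (k * prefixMean μ k)
            + (1 + b) * (k * prefixMean (fun i => μ i ^ 2) k) := by
          simp only [natCast_mul_prefixMean, mul_sum, sum_add_distrib, sum_sub_distrib, sum_const,
            Nat.card_Icc, Nat.add_sub_cancel, nsmul_eq_mul]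
      _ = _ := by unfold prefixVariance; ring
  rw [YangInequality, hsum, ← smul_eq_mul (k : ℝ),
    smul_nonpos_iff_nonpos_of_pos_left (by positivity)]

theorem YangInequality.le_mul_prefixMean (h : YangInequality b μ k) (hk : k ≠ 0) (hb : 0 ≤ b)
    (hG : 0 ≤ prefixMean μ k) : μ (k + 1) ≤ (1 + b) * prefixMean μ k := by
  have hV := prefixVariance_nonneg μ k
  have hmean := (yangInequality_iff hk).1 h
  by_contra! hlt
  have hGlt : prefixMean μ k < μ (k + 1) := by nlinarith
  have : 0 < (μ (k + 1) - prefixMean μ k) * (μ (k + 1) - (1 + b) * prefixMean μ k) :=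
    mul_pos (sub_pos.2 hGlt) (sub_pos.2 hlt)
  have : 0 ≤ (1 + b) * prefixVariance μ k := by positivity
  linarith

theorem YangInequality.sq_le_mul_chengYangFunctional (h : YangInequality b μ k) (hk : k ≠ 0)
    (hb : 0 ≤ b) : b / 2 * μ (k + 1) ^ 2 ≤ (1 + b) ^ 2 * chengYangFunctional b μ k := by
  have hmean := (yangInequality_iff hk).1 h
  have hsq : 0 ≤ (1 + b / 2) * (μ (k + 1) - (1 + b) * prefixMean μ k) ^ 2 := by positivity
  unfold chengYangFunctional
  linear_combination hsq + (1 + b) * hmean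

theorem chengYang_update_le {b e γ G V d : ℝ} (hb : 0 ≤ b) (he : 0 ≤ e) (hbe : (2 + b) * e ≤ 1)
    (hγ : b * e + b * (b + 1) / 2 * e ^ 2 + b * (b + 1) * (b + 2) / 6 * e ^ 3 ≤ γ)
    (hd : d * (d - b * G) + (1 + b) * V ≤ 0) :
    b / 2 * (G + e * d) ^ 2 - (1 - e) * (V + e * d ^ 2) ≤ (1 + γ) * (b / 2 * G ^ 2 - V) := by
  have hγ1 : b * e ≤ γ := by
    have : 0 ≤ b * (b + 1) / 2 * e ^ 2 + b * (b + 1) * (b + 2) / 6 * e ^ 3 := by positivity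
    linarith
  have hγe : 0 ≤ γ + e := by
    have : 0 ≤ b * e := by positivity
    linarith
  -- To leading order in `e` the form in `hform` is `2 * (1 + b) * e * (d - b / 2 * G) ^ 2`; the
  -- cubic lower bound on `γ` pays for the cross terms in `hGu`.
  have hG : 0 ≤ b / 2 * (1 + b / 2) * (γ - (b * e + b * (b + 1) / 2 * e ^ 2
      + b * (b + 1) * (b + 2) / 6 * e ^ 3)) * G ^ 2 :=
    mul_nonneg (mul_nonneg (by positivity) (sub_nonneg.2 hγ)) (sq_nonneg G)
  have hu : 0 ≤ ((γ - b * e) + e * (1 + b) * ((1 - (2 + b) * e) / 2)) * (d - b / 2 * G) ^ 2 :=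
    mul_nonneg (add_nonneg (sub_nonneg.2 hγ1) (mul_nonneg (by positivity) (by linarith)))
      (sq_nonneg _)
  have hGu : 0 ≤ 2 / 3 * (1 + b) * e *
      (b / 2 * (1 + b / 2) * e * G - 3 / 2 * (d - b / 2 * G)) ^ 2 := by positivity
  have hform : 0 ≤ (1 + b) * (b / 2) * γ * G ^ 2 - b * (γ + (2 + b) * e) * G * d
      + (γ + (2 + b) * e - (1 + b) * (2 + b) / 2 * e ^ 2) * d ^ 2 := by
    linear_combination hG + hu + hGu
  have hmul : 0 ≤ (1 + b) * ((1 + γ) * (b / 2 * G ^ 2 - V)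
      - (b / 2 * (G + e * d) ^ 2 - (1 - e) * (V + e * d ^ 2))) := by
    linear_combination hform + (γ + e) * hd
  exact sub_nonneg.1 (nonneg_of_mul_nonneg_right hmul (by positivity))

theorem YangInequality.chengYangFunctional_succ_div_le (h : YangInequality b μ k) (hb : 0 ≤ b)
    (hbk : 1 + b ≤ k) :
    chengYangFunctional b μ (k + 1) / ((k + 1 : ℕ) : ℝ) ^ b
      ≤ chengYangFunctional b μ k / (k : ℝ) ^ b := by
  have hk : (0 : ℝ) < k := by linarith
  have hratio : 1 / (1 - 1 / ((k : ℝ) + 1)) ^ b = ((k : ℝ) + 1) ^ b / (k : ℝ) ^ b := by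
    rw [one_sub_div (by positivity), add_sub_cancel_right, Real.div_rpow hk.le (by positivity),
      one_div_div]
  have hbinom := cubic_le_one_div_one_sub_rpow (x := 1 / ((k : ℝ) + 1)) hb (by positivity)
    (by rw [div_lt_one (by positivity)]; linarith)
  have hyang := (yangInequality_iff (by exact_mod_cast hk.ne')).1 h
  have hstep := chengYang_update_le (e := 1 / ((k : ℝ) + 1))
    (γ := ((k : ℝ) + 1) ^ b / (k : ℝ) ^ b - 1) (G := prefixMean μ k) (V := prefixVariance μ k)
    (d := μ (k + 1) - prefixMean μ k) hb (by positivity)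
    (by rw [mul_one_div, div_le_one (by positivity)]; linarith)
    (by linarith) (by linarith)
  rw [← prefixMean_succ, ← prefixVariance_succ, add_sub_cancel] at hstep
  push_cast
  rw [div_le_iff₀ (by positivity)]
  exact hstep.trans_eq (by unfold chengYangFunctional; ring)

theorem chengYangFunctional_div_rpow_le_of_le {m : ℕ} (hb : 0 ≤ b) (hbm : 1 + b ≤ m) (hmk : m ≤ k)
    (h : ∀ j, m ≤ j → j < k → YangInequality b μ j) :
    chengYangFunctional b μ k / (k : ℝ) ^ b ≤ chengYangFunctional b μ m / (m : ℝ) ^ b := by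
  induction k, hmk using Nat.le_induction with
  | base => exact le_rfl
  | succ k hmk ih =>
    have hstep := (h k hmk k.lt_succ_self).chengYangFunctional_succ_div_le hb
      (hbm.trans (by exact_mod_cast hmk))
    exact hstep.trans (ih fun j hj hjk => h j hj (hjk.trans k.lt_succ_self))

end Yang

section Numerics

variable {n : ℕ}

theorem one_add_four_div_pow_pow_le (hn : n ≠ 0) (p : ℕ) :
    ((1 + 4 / (n : ℝ)) ^ p) ^ n ≤ 55 ^ p := by
  rw [pow_right_comm]
  gcongr
  exact (pow_le_exp_of_le_one_add_div (by positivity) hn le_rfl).trans exp_four_lt.le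

theorem add_sq_mul_le_rpow_add_one (hn : 41 ≤ n) :
    (1 + 4 / (n : ℝ)) ^ 2 * (((n : ℝ) ^ 2 + 10 * n + 17) / ((n : ℝ) + 1) ^ 2)
      ≤ ((n : ℝ) + 1) ^ (4 / (n : ℝ)) := by
  refine le_rpow_div_of_pow_le (p := 4) (by positivity) (by positivity) (by lia) ?_
  rcases lt_or_ge n 54 with hn54 | hn54
  · interval_cases n <;> norm_num
  · have hle : (1 + 4 / (n : ℝ)) ^ 2 * (((n : ℝ) ^ 2 + 10 * n + 17) / ((n : ℝ) + 1) ^ 2)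
        ≤ (1 + 4 / (n : ℝ)) ^ 4 := by
      rw [show (1 + 4 / (n : ℝ)) ^ 4 = (1 + 4 / (n : ℝ)) ^ 2 * (1 + 4 / (n : ℝ)) ^ 2 by ring]
      gcongr
      rw [one_add_div (by positivity), div_pow, div_le_div_iff₀ (by positivity) (by positivity)]
      nlinarith
    calc _ ≤ ((1 + 4 / (n : ℝ)) ^ 4) ^ n := by gcongr
      _ ≤ 55 ^ 4 := one_add_four_div_pow_pow_le (by lia) 4
      _ ≤ ((n : ℝ) + 1) ^ 4 := by
          gcongr
          exact_mod_cast (by lia : 55 ≤ n + 1)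

theorem mul_le_eleven_rpow_mul (hn : 41 ≤ n) :
    ((n : ℝ) + 4) * (n + 5) ≤ (11 : ℝ) ^ (2 / (n : ℝ)) * (((n : ℝ) + 4) * (n + 1) - 4 * 11) := by
  have hn' : (41 : ℝ) ≤ n := by exact_mod_cast hn
  have hD : 0 < ((n : ℝ) + 4) * (n + 1) - 4 * 11 := by nlinarith
  refine mul_le_rpow_mul_of_div_pow_le (p := 2) (by positivity) (by positivity) hD (by lia) ?_
  rcases lt_or_ge n 54 with hn54 | hn54
  · interval_cases n <;> norm_num
  · refine (pow_le_exp_of_le_one_add_div (by positivity) (by lia) ?_).trans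
      exp_nineteen_fourths_lt.le
    have hn54' : (54 : ℝ) ≤ n := by exact_mod_cast hn54
    rw [one_add_div (by positivity), div_le_div_iff₀ hD (by positivity)]
    nlinarith

theorem mul_le_self_rpow_mul (hn : 42 ≤ n) :
    ((n : ℝ) + 4) * (n + 5) ≤ (n : ℝ) ^ (2 / (n : ℝ)) * (((n : ℝ) + 4) * (n + 1) - 4 * n) := by
  have hD : 0 < ((n : ℝ) + 4) * (n + 1) - 4 * n := by nlinarith [n.cast_nonneg (α := ℝ)]
  refine mul_le_rpow_mul_of_div_pow_le (p := 2) (by positivity) (by positivity) hD (by lia) ?_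
  rcases lt_or_ge n 55 with hn55 | hn55
  · interval_cases n <;> norm_num
  · have hle : ((n : ℝ) + 4) * (n + 5) / (((n : ℝ) + 4) * (n + 1) - 4 * n)
        ≤ (1 + 4 / (n : ℝ)) ^ 2 := by
      rw [one_add_div (by positivity), div_pow, div_le_div_iff₀ hD (by positivity)]
      nlinarith [n.cast_nonneg (α := ℝ)]
    calc _ ≤ ((1 + 4 / (n : ℝ)) ^ 2) ^ n := by gcongr
      _ ≤ 55 ^ 2 := one_add_four_div_pow_pow_le (by lia) 2
      _ ≤ (n : ℝ) ^ 2 := by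
          gcongr
          exact_mod_cast hn55

theorem mul_le_forty_rpow_mul :
    ((41 : ℝ) + 4) * (41 + 5) ≤ (40 : ℝ) ^ ((2 : ℝ) / 41) * ((41 + 4) * (41 + 1) - 4 * 40) :=
  mod_cast mul_le_rpow_mul_of_div_pow_le (x := 40) (n := 41) (p := 2) (by norm_num) (by norm_num)
    (by norm_num) (by norm_num) (by norm_num)

theorem le_forty_one_rpow : (1.198 : ℝ) ≤ 41 ^ ((2 : ℝ) / 41) :=
  mod_cast le_rpow_div_of_pow_le (x := 1.198) (y := 41) (n := 41) (p := 2) (by norm_num)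
    (by norm_num) (by norm_num) (by norm_num)

theorem mul_le_natCast_rpow_mul {k : ℕ} (hn : 41 ≤ n) (hk : 11 ≤ k) (hkn : k ≤ n)
    (hne : k ≠ 41 ∨ n ≠ 41) :
    ((n : ℝ) + 4) * (n + 5) ≤ (k : ℝ) ^ (2 / (n : ℝ)) * (((n : ℝ) + 4) * (n + 1) - 4 * k) := by
  obtain ⟨r, hkr, hr⟩ : ∃ r : ℕ, k ≤ r ∧
      ((n : ℝ) + 4) * (n + 5) ≤ (r : ℝ) ^ (2 / (n : ℝ)) * (((n : ℝ) + 4) * (n + 1) - 4 * r) := by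
    rcases hn.eq_or_lt with rfl | hn42
    · exact ⟨40, by lia, mod_cast mul_le_forty_rpow_mul⟩
    · exact ⟨n, hkn, mul_le_self_rpow_mul hn42⟩
  have hconc := concaveOn_rpow_mul_sub (s := 2 / (n : ℝ)) (c := ((n : ℝ) + 4) * (n + 1)) (d := 4)
    (by positivity) (div_le_one_of_le₀ (by exact_mod_cast (by lia : 2 ≤ n)) (by positivity))
    (by positivity) (by positivity)
  exact (le_min (mul_le_eleven_rpow_mul hn) hr).trans
    (hconc.min_le_of_mem_Icc (by simp) (by simp) ⟨by exact_mod_cast hk, by exact_mod_cast hkr⟩)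

end Numerics

section EigenvalueBounds

variable {μ : ℕ → ℝ} {n k : ℕ}

theorem YangInequality.mul_le_of_monotoneOn (h : YangInequality (4 / n) μ k) (hk : k ≠ 0)
    (hkn : k ≤ n) (hμ : MonotoneOn μ (Set.Ici 1)) (hG : 0 ≤ prefixMean μ k) :
    μ (k + 1) * (((n : ℝ) + 4) * (n + 1) - 4 * k)
      ≤ (n + 4) * ((n + 1) * prefixMean μ (n + 1)) := by
  have hn : (0 : ℝ) < n := by exact_mod_cast (by lia : 0 < n)
  have hsum := mul_prefixMean_add_le_of_monotoneOn hμ (by lia : k ≤ n + 1)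
  push_cast at hsum
  have hle : n * μ (k + 1) ≤ (n + 4) * prefixMean μ k := by
    refine (mul_le_mul_of_nonneg_left (h.le_mul_prefixMean hk (by positivity) hG) hn.le).trans_eq ?_
    field_simp
  calc μ (k + 1) * (((n : ℝ) + 4) * (n + 1) - 4 * k)
      = k * (n * μ (k + 1)) + (n + 4) * ((n + 1 - k) * μ (k + 1)) := by ring
    _ ≤ k * ((n + 4) * prefixMean μ k) + (n + 4) * ((n + 1 - k) * μ (k + 1)) := by gcongr
    _ = (n + 4) * (k * prefixMean μ k + (n + 1 - k) * μ (k + 1)) := by ring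
    _ ≤ (n + 4) * ((n + 1) * prefixMean μ (n + 1)) := by gcongr

theorem YangInequality.apply_forty_two_le (h : YangInequality (4 / 41) μ 41)
    (hμ : MonotoneOn μ (Set.Ici 1)) (h1 : 0 ≤ μ 1) (hlow : 42 * prefixMean μ 42 ≤ 46 * μ 1) :
    μ 42 ≤ 1.198 * μ 1 := by
  by_contra! hlt
  have hsum : 41 * prefixMean μ 41 + (42 - 41) * μ 42 ≤ 42 * prefixMean μ 42 :=
    mod_cast mul_prefixMean_add_le_of_monotoneOn hμ (by simp : 41 ≤ 42)
  have hvar : (prefixMean μ 41 - μ 1) ^ 2 ≤ (41 - 1) * prefixVariance μ 41 :=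
    mod_cast sq_prefixMean_sub_first_le μ (k := 41) (by simp)
  have hmean : (μ 42 - prefixMean μ 41) * (μ 42 - (1 + 4 / 41) * prefixMean μ 41)
      + (1 + 4 / 41) * prefixVariance μ 41 ≤ 0 := (yangInequality_iff (by simp)).1 h
  have hexcess : 0 < μ 42 - 1.198 * μ 1 := sub_pos.2 hlt
  have hslack : 0 ≤ 46 * μ 1 - μ 42 - 41 * prefixMean μ 41 := by linarith
  -- Written in `μ 1` and the two quantities above, this form has no negative coefficient.
  have hform : 0 < 40 * ((μ 42 - prefixMean μ 41) * (41 * μ 42 - 45 * prefixMean μ 41))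
      + 45 * (prefixMean μ 41 - μ 1) ^ 2 := by
    linarith [mul_pos hexcess hexcess, mul_nonneg hexcess.le hslack, mul_nonneg hslack hslack,
      mul_nonneg h1 h1, mul_nonneg h1 hexcess.le, mul_nonneg h1 hslack]
  linarith

theorem chengYangFunctional_add_one_le (hn : n ≠ 0) (h1 : 0 ≤ μ 1)
    (hG : 0 ≤ prefixMean μ (n + 1)) (hlow : (n + 1) * prefixMean μ (n + 1) ≤ (n + 5) * μ 1) :
    n / 2 * chengYangFunctional (4 / n) μ (n + 1)
      ≤ ((n : ℝ) ^ 2 + 10 * n + 17) / ((n : ℝ) + 1) ^ 2 * μ 1 ^ 2 := by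
  have hvar := sq_prefixMean_sub_first_le μ n.succ_ne_zero
  rw [Nat.succ_eq_add_one, Nat.cast_succ, add_sub_cancel_right] at hvar
  have hsq : ((n + 1) * prefixMean μ (n + 1)) ^ 2 ≤ ((n + 5) * μ 1) ^ 2 := by gcongr
  have hmul := mul_le_mul_of_nonneg_left hlow (by positivity : 0 ≤ 2 * ((n : ℝ) + 1) * μ 1)
  have hF : n * chengYangFunctional (4 / n) μ (n + 1)
      = 2 * prefixMean μ (n + 1) ^ 2 - n * prefixVariance μ (n + 1) := by
    unfold chengYangFunctional
    field_simp
    ring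
  have hF' : n * chengYangFunctional (4 / n) μ (n + 1)
      ≤ prefixMean μ (n + 1) ^ 2 + 2 * μ 1 * prefixMean μ (n + 1) - μ 1 ^ 2 := by linarith
  rw [div_mul_eq_mul_div, div_mul_eq_mul_div, le_div_iff₀ (by positivity)]
  linarith [mul_le_mul_of_nonneg_right hF' (by positivity : 0 ≤ ((n : ℝ) + 1) ^ 2)]

theorem apply_succ_le_rpow_mul_of_lt (hn : 41 ≤ n) (hnk : n < k) (h1 : 0 ≤ μ 1)
    (hG : 0 ≤ prefixMean μ (n + 1)) (hlow : (n + 1) * prefixMean μ (n + 1) ≤ (n + 5) * μ 1)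
    (hyang : ∀ j, n < j → j ≤ k → YangInequality (4 / n) μ j) :
    μ (k + 1) ≤ (k : ℝ) ^ (2 / (n : ℝ)) * μ 1 := by
  have hn' : (41 : ℝ) ≤ n := by exact_mod_cast hn
  have hk0 : (0 : ℝ) < k := by exact_mod_cast (by lia : 0 < k)
  have hb : 4 / (n : ℝ) ≤ 1 := by rw [div_le_one (by positivity)]; linarith
  have hdecay := chengYangFunctional_div_rpow_le_of_le (b := 4 / n) (μ := μ) (by positivity)
    (m := n + 1) (by push_cast; linarith) hnk fun j hj hjk => hyang j hj hjk.le
  rw [div_le_iff₀ (by positivity), Nat.cast_succ] at hdecay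
  have hyang_sq := (hyang k hnk le_rfl).sq_le_mul_chengYangFunctional (by lia) (by positivity)
  have hbase := chengYangFunctional_add_one_le (by lia) h1 hG hlow
  refine le_of_sq_le_sq ?_ (by positivity)
  calc μ (k + 1) ^ 2 = n / 2 * (4 / n / 2 * μ (k + 1) ^ 2) := by field_simp; ring
    _ ≤ n / 2 * ((1 + 4 / n) ^ 2 * (chengYangFunctional (4 / n) μ (n + 1)
          / ((n : ℝ) + 1) ^ (4 / (n : ℝ)) * (k : ℝ) ^ (4 / (n : ℝ)))) := by
        gcongr n / 2 * ?_
        exact hyang_sq.trans (by gcongr)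
    _ = (k : ℝ) ^ (4 / (n : ℝ)) / ((n : ℝ) + 1) ^ (4 / (n : ℝ)) * ((1 + 4 / n) ^ 2
          * (n / 2 * chengYangFunctional (4 / n) μ (n + 1))) := by ring
    _ ≤ (k : ℝ) ^ (4 / (n : ℝ)) / ((n : ℝ) + 1) ^ (4 / (n : ℝ)) * ((1 + 4 / n) ^ 2
          * (((n : ℝ) ^ 2 + 10 * n + 17) / ((n : ℝ) + 1) ^ 2 * μ 1 ^ 2)) := by gcongr
    _ ≤ (k : ℝ) ^ (4 / (n : ℝ)) / ((n : ℝ) + 1) ^ (4 / (n : ℝ))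
          * (((n : ℝ) + 1) ^ (4 / (n : ℝ)) * μ 1 ^ 2) := by
        rw [← mul_assoc ((1 + 4 / (n : ℝ)) ^ 2)]
        gcongr
        exact add_sq_mul_le_rpow_add_one hn
    _ = ((k : ℝ) ^ (2 / (n : ℝ)) * μ 1) ^ 2 := by
        rw [mul_pow, ← Real.rpow_mul_natCast hk0.le,
          show 2 / (n : ℝ) * (2 : ℕ) = 4 / n by push_cast; ring]
        field_simp

theorem apply_succ_le_rpow_mul_of_le (hn : 41 ≤ n) (hk : 11 ≤ k) (hkn : k ≤ n)
    (hμ : MonotoneOn μ (Set.Ici 1)) (h1 : 0 ≤ μ 1) (hG : 0 ≤ prefixMean μ k)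
    (hlow : (n + 1) * prefixMean μ (n + 1) ≤ (n + 5) * μ 1) (hyang : YangInequality (4 / n) μ k) :
    μ (k + 1) ≤ (k : ℝ) ^ (2 / (n : ℝ)) * μ 1 := by
  by_cases hne : k = 41 ∧ n = 41
  · obtain ⟨rfl, rfl⟩ := hne
    have hmean : 42 * prefixMean μ 42 ≤ 46 * μ 1 := by norm_num at hlow; exact hlow
    calc μ 42 ≤ 1.198 * μ 1 := YangInequality.apply_forty_two_le (mod_cast hyang) hμ h1 hmean
      _ ≤ (41 : ℝ) ^ ((2 : ℝ) / 41) * μ 1 := by gcongr; exact le_forty_one_rpow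
  · have hkn' : (k : ℝ) ≤ n := by exact_mod_cast hkn
    have hD : 0 < ((n : ℝ) + 4) * (n + 1) - 4 * k := by nlinarith [k.cast_nonneg (α := ℝ)]
    refine le_of_mul_le_mul_right ?_ hD
    calc μ (k + 1) * (((n : ℝ) + 4) * (n + 1) - 4 * k)
        ≤ (n + 4) * ((n + 1) * prefixMean μ (n + 1)) :=
          hyang.mul_le_of_monotoneOn (by lia) hkn hμ hG
      _ ≤ (n + 4) * ((n + 5) * μ 1) := by gcongr
      _ = (n + 4) * (n + 5) * μ 1 := by ring
      _ ≤ (k : ℝ) ^ (2 / (n : ℝ)) * ((n + 4) * (n + 1) - 4 * k) * μ 1 := by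
          gcongr ?_ * μ 1
          exact mul_le_natCast_rpow_mul hn hk hkn (by lia)
      _ = (k : ℝ) ^ (2 / (n : ℝ)) * μ 1 * ((n + 4) * (n + 1) - 4 * k) := by ring

end EigenvalueBounds

theorem theorem_four_five_part_one_general
    (n : ℕ) (hn : 41 ≤ n) (μ : ℕ → ℝ)
    (hmono : ∀ i, 1 ≤ i → μ i ≤ μ (i + 1))
    (hyang1 : ∀ k, 1 ≤ k → ∑ i ∈ Finset.Icc 1 k,
        (μ (k + 1) - μ i) * (μ (k + 1) - (1 + 4 / (n : ℝ)) * μ i) ≤ 0)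
    (hlow : ∑ i ∈ Finset.Icc 1 n, (μ (i + 1) - μ 1) ≤ 4 * μ 1) :
    ∀ k, 11 ≤ k → μ (k + 1) ≤ (k : ℝ) ^ ((2 : ℝ) / (n : ℝ)) * μ 1 := by
  intro k hk
  have hμ : MonotoneOn μ (Set.Ici 1) := monotoneOn_nat_Ici_of_le_succ hmono
  have hfirst (i : ℕ) (hi : 1 ≤ i) : μ 1 ≤ μ i := hμ (by simp) hi hi
  have h1 : 0 ≤ μ 1 := by
    have : 0 ≤ ∑ i ∈ Icc 1 n, (μ (i + 1) - μ 1) :=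
      sum_nonneg fun i _ => sub_nonneg.2 (hfirst (i + 1) (by lia))
    linarith
  have hG := prefixMean_nonneg fun i hi => h1.trans (hfirst i hi)
  have hmean : (n + 1) * prefixMean μ (n + 1) ≤ (n + 5) * μ 1 := by
    rw [add_one_mul_prefixMean_eq_sum_sub]
    linarith
  rcases le_or_gt k n with hkn | hnk
  · exact apply_succ_le_rpow_mul_of_le hn hk hkn hμ h1 (hG k) hmean (hyang1 k (by lia))
  · exact apply_succ_le_rpow_mul_of_lt hn hnk h1 (hG (n + 1)) hmean fun j hj _ => hyang1 j (by lia)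

/-- Sequence form of part (1) of Theorem 4.5. -/
theorem theorem_four_five_part_one
    (n : ℕ) (hn : 41 ≤ n) (μ : ℕ → ℝ)
    (hpos : ∀ i, 1 ≤ i → 0 < μ i)
    (hmono : ∀ i, 1 ≤ i → μ i ≤ μ (i + 1))
    (hyang1 : ∀ k, 1 ≤ k → ∑ i ∈ Finset.Icc 1 k,
        (μ (k + 1) - μ i) * (μ (k + 1) - (1 + 4 / (n : ℝ)) * μ i) ≤ 0)
    (hlow : ∑ i ∈ Finset.Icc 1 n, (μ (i + 1) - μ 1) ≤ 4 * μ 1) :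
    ∀ k, 41 ≤ k → μ (k + 1) ≤ (k : ℝ) ^ ((2 : ℝ) / (n : ℝ)) * μ 1 := by
  intro k hk
  exact theorem_four_five_part_one_general n hn μ hmono hyang1 hlow k (by lia)
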